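/- arXiv:2106.11604 — 2 statements merged into one kernel-verified Lean document; each statement's English description precedes it below -/
import Mathlib

section
/- Let A be the shift operator on L²(ℝ), n ∈ ℕ, κ_{n,0}, …, κ_{n,n} ∈ ℝ, g_n := Σ_{k=0}^n k!·κ_{n,k}·1_{[-k,-k+1]}, β ∈ ℝ, Ā_n z := A z − β⟨g_n,z⟩1_{[0,1]}, and let γ(i,k) be defined by γ(0,0)=1, γ(i,k)=γ(i−1,k−1) for 1 ≤ i ≤ k, and γ(0,k)=Σ_{j=0}^{(k−1)∧n}(−β)·j!·κ_{n,j}·γ(j,k−1). Then for all α, a₁, a₂ > 0, T > 0, M ∈ ℕ and t ∈ [0,T], the truncated control satisfies the explicit polynomial formula (α a₂/(2a₁))·⟨g_n, Σ_{k=0}^M ((T−t)^k/k!)·Ā_n^k 1_{[0,1]}⟩ = (α a₂/(2a₁))·Σ_{k=0}^M ( Σ_{i=0}^{k∧n} i!·κ_{n,i}·γ(i,k)/k! )·(T−t)^k. -/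
open MeasureTheory

/-- The indicator function of the interval `[a, b]`, regarded as an element of `L²(ℝ)`. -/
noncomputable def ind (a b : ℝ) : Lp ℝ 2 (volume : Measure ℝ) :=
  indicatorConstLp 2 (measurableSet_Icc : MeasurableSet (Set.Icc a b))
    (by rw [Real.volume_Icc]; exact ENNReal.ofReal_ne_top) (1 : ℝ)

/-- The coefficients `γ(i,k)`: `γ(0,0) = 1` and, for `k ≥ 1`, `γ(i,k) = γ(i−1,k−1)` for
`i = 1, …, k` and `γ(0,k) = ∑_{j=0}^{(k−1)∧n} (−β) j! κ_{n,j} γ(j,k−1)`. -/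
noncomputable def gam (β : ℝ) (n : ℕ) (κ : ℕ → ℝ) : ℕ → ℕ → ℝ
  | i, 0 => if i = 0 then 1 else 0
  | 0, k + 1 => ∑ j ∈ Finset.range (min k n + 1),
      (-β) * (j.factorial : ℝ) * κ j * gam β n κ j k
  | i + 1, k + 1 => gam β n κ i k

lemma ind_inner (i j : ℕ) :
    (inner ℝ (ind (-(i : ℝ)) (-(i : ℝ) + 1)) (ind (-(j : ℝ)) (-(j : ℝ) + 1)) : ℝ)
      = if i = j then 1 else 0 := by
  unfold ind
  rw [L2.inner_indicatorConstLp_indicatorConstLp _ _ (by rw [Real.volume_Icc]; exact ENNReal.ofReal_ne_top)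
    (by rw [Real.volume_Icc]; exact ENNReal.ofReal_ne_top)]
  rw [Set.Icc_inter_Icc, measureReal_def, Real.volume_Icc]
  split_ifs with h
  · subst h
    simp
  · have : (-(i : ℝ) + 1) ⊓ (-(j : ℝ) + 1) - (-(i : ℝ)) ⊔ (-(j : ℝ)) ≤ 0 := by
      rcases lt_or_gt_of_ne h with h | h
      · have h' : (i : ℝ) + 1 ≤ j := by exact_mod_cast h
        have h1 := inf_le_right (a := -(i : ℝ) + 1) (b := -(j : ℝ) + 1)
        have h2 := le_sup_left (a := -(i : ℝ)) (b := -(j : ℝ))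
        linarith
      · have h' : (j : ℝ) + 1 ≤ i := by exact_mod_cast h
        have h1 := inf_le_left (a := -(i : ℝ) + 1) (b := -(j : ℝ) + 1)
        have h2 := le_sup_right (a := -(i : ℝ)) (b := -(j : ℝ))
        linarith
    rw [ENNReal.ofReal_of_nonpos this]
    simp

lemma shift_ind (A : Lp ℝ 2 (volume : Measure ℝ) →L[ℝ] Lp ℝ 2 (volume : Measure ℝ))
    (hA : ∀ f : Lp ℝ 2 (volume : Measure ℝ), (A f : ℝ → ℝ) =ᵐ[volume] fun x => f (x + 1))
    (i : ℕ) : A (ind (-(i : ℝ)) (-(i : ℝ) + 1))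
      = ind (-((i + 1 : ℕ) : ℝ)) (-((i + 1 : ℕ) : ℝ) + 1) := by
  apply Lp.ext
  have h1 : (ind (-(i : ℝ)) (-(i : ℝ) + 1) : ℝ → ℝ) =ᵐ[volume]
      (Set.Icc (-(i : ℝ)) (-(i : ℝ) + 1)).indicator fun _ => (1 : ℝ) := indicatorConstLp_coeFn
  have h2 : (ind (-((i + 1 : ℕ) : ℝ)) (-((i + 1 : ℕ) : ℝ) + 1) : ℝ → ℝ) =ᵐ[volume]
      (Set.Icc (-((i + 1 : ℕ) : ℝ)) (-((i + 1 : ℕ) : ℝ) + 1)).indicator fun _ => (1 : ℝ) :=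
    indicatorConstLp_coeFn
  have h3 := (measurePreserving_add_right (volume : Measure ℝ) 1).quasiMeasurePreserving.ae_eq_comp h1
  filter_upwards [hA (ind (-(i : ℝ)) (-(i : ℝ) + 1)), h2, h3] with x hx h2 h3
  simp only [Function.comp_apply] at h3
  rw [hx, h2, h3]
  simp only [Set.indicator_apply, Set.mem_Icc]
  push_cast
  congr 1
  apply propext
  constructor <;> rintro ⟨ha, hb⟩ <;> constructor <;> linarith

/-- With `A` the shift operator on `L²(ℝ)`, `g_n = ∑_{k=0}^n k! κ_{n,k} 1_{[-k,-k+1]}`,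
`Ā_n z = A z − β ⟨g_n, z⟩ 1_{[0,1]}` and `γ(i,k)` as above, the truncated control satisfies
`(α a₂/(2a₁)) ⟨g_n, ∑_{k=0}^M ((T−t)^k/k!) Ā_n^k 1_{[0,1]}⟩
  = (α a₂/(2a₁)) ∑_{k=0}^M ( ∑_{i=0}^{k∧n} i! κ_{n,i} γ(i,k)/k! ) (T−t)^k`. -/
theorem truncated_control_polynomial_formula
    (A : Lp ℝ 2 (volume : Measure ℝ) →L[ℝ] Lp ℝ 2 (volume : Measure ℝ))
    (hA : ∀ f : Lp ℝ 2 (volume : Measure ℝ), (A f : ℝ → ℝ) =ᵐ[volume] fun x => f (x + 1))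
    (n : ℕ) (κ : ℕ → ℝ) (β : ℝ)
    (gn : Lp ℝ 2 (volume : Measure ℝ))
    (hgn : gn = ∑ k ∈ Finset.range (n + 1),
      ((k.factorial : ℝ) * κ k) • ind (-(k : ℝ)) (-(k : ℝ) + 1))
    (Abar : Lp ℝ 2 (volume : Measure ℝ) →L[ℝ] Lp ℝ 2 (volume : Measure ℝ))
    (hAbar : ∀ z, Abar z = A z - (β * (inner ℝ gn z : ℝ)) • ind 0 1)
    (α a₁ a₂ T : ℝ) (hα : 0 < α) (ha₁ : 0 < a₁) (ha₂ : 0 < a₂) (hT : 0 < T)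
    (M : ℕ) (t : ℝ) (ht : t ∈ Set.Icc (0 : ℝ) T) :
    (α * a₂ / (2 * a₁)) *
        (inner ℝ gn (∑ k ∈ Finset.range (M + 1),
          ((T - t) ^ k / (k.factorial : ℝ)) • ((Abar ^ k) (ind 0 1))) : ℝ) =
      (α * a₂ / (2 * a₁)) * ∑ k ∈ Finset.range (M + 1),
        (∑ i ∈ Finset.range (min k n + 1),
          (i.factorial : ℝ) * κ i * gam β n κ i k / (k.factorial : ℝ)) * (T - t) ^ k := by
  have hinner : ∀ (k : ℕ) (c : ℕ → ℝ),
      (inner ℝ gn (∑ i ∈ Finset.range (k + 1), c i • ind (-(i : ℝ)) (-(i : ℝ) + 1)) : ℝ)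
        = ∑ i ∈ Finset.range (min k n + 1), (i.factorial : ℝ) * κ i * c i := by
    intro k c
    rw [hgn]
    simp only [inner_sum, sum_inner, real_inner_smul_left, real_inner_smul_right, ind_inner,
      mul_ite, mul_one, mul_zero]
    simp only [Finset.sum_ite_eq, Finset.sum_ite_eq']
    rw [← Finset.sum_filter]
    have hs : (Finset.range (k + 1)).filter (fun i => i ∈ Finset.range (n + 1))
        = Finset.range (min k n + 1) := by
      ext i
      simp only [Finset.mem_filter, Finset.mem_range]
      omega
    rw [hs]
    exact Finset.sum_congr rfl fun i _ => by ring
  have hpow : ∀ k : ℕ, (Abar ^ k) (ind 0 1)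
      = ∑ i ∈ Finset.range (k + 1), gam β n κ i k • ind (-(i : ℝ)) (-(i : ℝ) + 1) := by
    intro k
    induction k with
    | zero => simp [gam]
    | succ k ih =>
      rw [pow_succ', mul_apply_eq_comp, ih, hAbar, hinner, map_sum,
        Finset.sum_range_succ' _ (k + 1), sub_eq_add_neg, ← neg_smul]
      congr 1
      · refine Finset.sum_congr rfl fun i _ => ?_
        rw [map_smul, shift_ind A hA, gam]
      · rw [gam, ← neg_mul, Finset.mul_sum]
        simp only [Nat.cast_zero, neg_zero, zero_add]
        congr 1
        exact Finset.sum_congr rfl fun i _ => by ring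
  congr 1
  rw [inner_sum]
  refine Finset.sum_congr rfl fun k _ => ?_
  rw [real_inner_smul_right, hpow, hinner, ← Finset.sum_div]
  ring
end

section
/- Let A be the shift operator on L²(ℝ), N ∈ ℕ, and Ā z := A z − N!·⟨1_{[-N,-N+1]}, z⟩·1_{[0,1]}. Then for every s ≥ 0, ⟨1_{[-N,-N+1]}, exp(sĀ) 1_{[0,1]}⟩ = Σ_{p=0}^∞ (−1)^p·(N!)^p·s^{p(N+1)+N}/(p(N+1)+N)!, i.e. it equals s^N·E_{N+1,N+1}(−N!·s^{N+1}) where E_{a,b}(z) := Σ_{p=0}^∞ z^p/Γ(ap+b) is the Mittag-Leffler function. Consequently the optimal advertising control for the monomial kernel t^N with α = β = 1, a₁ = 1, a₂ = 1 is û(t) = (N!·(T−t)^N/2)·E_{N+1,N+1}(−N!·(T−t)^{N+1}). -/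
open MeasureTheory

/-- The Mittag-Leffler function `E_{a,b}(z) = ∑_{p=0}^∞ z^p / Γ(ap + b)`. -/
noncomputable def mittagLeffler (a b z : ℝ) : ℝ :=
  ∑' p : ℕ, z ^ p / Real.Gamma (a * p + b)

theorem aux_inner (a b : ℝ) (f : Lp ℝ 2 (volume : Measure ℝ)) :
    (inner ℝ (ind a b) f : ℝ) = ∫ x in Set.Icc a b, f x := by
  unfold ind
  exact L2.inner_indicatorConstLp_one _ _ f

theorem aux_shift (A : Lp ℝ 2 (volume : Measure ℝ) →L[ℝ] Lp ℝ 2 (volume : Measure ℝ))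
    (hA : ∀ f : Lp ℝ 2 (volume : Measure ℝ), (A f : ℝ → ℝ) =ᵐ[volume] fun x => f (x + 1))
    (a b : ℝ) (f : Lp ℝ 2 (volume : Measure ℝ)) :
    (inner ℝ (ind a b) (A f) : ℝ) = inner ℝ (ind (a + 1) (b + 1)) f := by
  rw [aux_inner, aux_inner, integral_congr_ae (ae_restrict_of_ae (hA f))]
  have h := (measurePreserving_add_right (volume : Measure ℝ) (1 : ℝ)).setIntegral_preimage_emb
    (measurableEmbedding_addRight (1 : ℝ)) (fun x => f x) (Set.Icc (a + 1) (b + 1))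
  rw [← h]
  congr 2
  simp

theorem aux_orth (k : ℤ) :
    (inner ℝ (ind (-(k : ℝ)) (-(k : ℝ) + 1)) (ind 0 1) : ℝ) = if k = 0 then 1 else 0 := by
  have h : (inner ℝ (ind (-(k : ℝ)) (-(k : ℝ) + 1)) (ind 0 1) : ℝ) =
      volume.real (Set.Icc (-(k : ℝ)) (-(k : ℝ) + 1) ∩ Set.Icc 0 1) := by
    unfold ind
    rw [L2.inner_indicatorConstLp_one, setIntegral_congr_ae (g := (Set.Icc (0:ℝ) 1).indicator
      (fun _ => (1 : ℝ))) measurableSet_Icc (by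
        filter_upwards [indicatorConstLp_coeFn (p := 2) (μ := (volume : Measure ℝ))
          (hs := (measurableSet_Icc : MeasurableSet (Set.Icc (0:ℝ) 1)))
          (hμs := by rw [Real.volume_Icc]; exact ENNReal.ofReal_ne_top) (c := (1 : ℝ))] with x hx _
        exact hx)]
    rw [setIntegral_indicator measurableSet_Icc]
    simp
  rw [h, Set.Icc_inter_Icc, Real.volume_real_Icc]
  split_ifs with hk
  · subst hk; simp
  · apply max_eq_right
    rcases lt_or_gt_of_ne hk with h1 | h1
    · have : (k : ℝ) ≤ -1 := by exact_mod_cast (by omega : k ≤ -1)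
      have h2 : min (-(k : ℝ) + 1) 1 ≤ 1 := min_le_right _ _
      have h3 : -(k : ℝ) ≤ max (-(k : ℝ)) 0 := le_max_left _ _
      linarith
    · have : (1 : ℝ) ≤ k := by exact_mod_cast h1
      have h2 : min (-(k : ℝ) + 1) 1 ≤ -(k : ℝ) + 1 := min_le_left _ _
      have h3 : 0 ≤ max (-(k : ℝ)) 0 := le_max_right _ _
      linarith

/-- Moments in abstract form. -/
theorem aux_rec (c : ℝ) (N : ℕ) (b : ℤ → ℕ → ℝ) (h0 : ∀ k, b k 0 = if k = 0 then 1 else 0)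
    (hs : ∀ k n, b k (n + 1) = b (k - 1) n - c * b N n * (if k = 0 then 1 else 0)) :
    (∀ p : ℕ, b N (p * (N + 1) + N) = (-c) ^ p) ∧
    (∀ n, (∀ p : ℕ, n ≠ p * (N + 1) + N) → b N n = 0) := by
  have hneg : ∀ n, ∀ k < 0, b k n = 0 := by
    intro n
    induction n with
    | zero => intro k hk; rw [h0, if_neg hk.ne]
    | succ n ih => intro k hk; rw [hs, if_neg hk.ne, ih _ (by omega)]; simp
  have hdiag : ∀ (m : ℕ) (k : ℕ) (n : ℕ), b (k + m : ℕ) (n + m) = b k n := by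
    intro m
    induction m with
    | zero => intro k n; rfl
    | succ m ih =>
      intro k n
      rw [← add_assoc n, hs, if_neg (by omega), ← ih k n]
      have : (((k + (m + 1) : ℕ) : ℤ) - 1) = ((k + m : ℕ) : ℤ) := by push_cast; ring
      rw [this]; simp
  have hstep : ∀ n, b N (n + (N + 1)) = -c * b N n := by
    intro n
    have h := hdiag N 0 (n + 1)
    rw [hs] at h
    rw [Nat.zero_add, show n + 1 + N = n + (N + 1) by ring] at h
    rw [h]
    simp [hneg n (-1) (by norm_num)]
  have hbase : b N N = 1 := by
    have h := hdiag N 0 0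
    simpa [h0] using h
  have hlow : ∀ n < N, b N n = 0 := by
    intro n hn
    have h := hdiag n (N - n) 0
    rw [Nat.sub_add_cancel hn.le, Nat.zero_add] at h
    rw [h, h0, if_neg (by omega)]
  constructor
  · intro p
    induction p with
    | zero => simpa using hbase
    | succ p ih =>
      rw [show (p + 1) * (N + 1) + N = p * (N + 1) + N + (N + 1) by ring, hstep, ih, pow_succ]
      ring
  · intro n
    induction n using Nat.strong_induction_on with
    | _ n ih =>
      intro hn
      rcases lt_trichotomy n N with h | h | h
      · exact hlow n h
      · exact absurd h (by simpa using hn 0)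
      · obtain ⟨m, rfl⟩ := Nat.exists_eq_add_of_lt h
        rw [show N + m + 1 = m + (N + 1) by ring, hstep, ih m (by omega), mul_zero]
        intro p hp
        apply hn (p + 1)
        rw [hp]; ring

theorem aux_main
    (A : Lp ℝ 2 (volume : Measure ℝ) →L[ℝ] Lp ℝ 2 (volume : Measure ℝ))
    (hA : ∀ f : Lp ℝ 2 (volume : Measure ℝ), (A f : ℝ → ℝ) =ᵐ[volume] fun x => f (x + 1))
    (N : ℕ)
    (Abar : Lp ℝ 2 (volume : Measure ℝ) →L[ℝ] Lp ℝ 2 (volume : Measure ℝ))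
    (hAbar : ∀ z, Abar z = A z -
      ((N.factorial : ℝ) * (inner ℝ (ind (-(N : ℝ)) (-(N : ℝ) + 1)) z : ℝ)) • ind 0 1) (s : ℝ) :
      (inner ℝ (ind (-(N : ℝ)) (-(N : ℝ) + 1))
          (NormedSpace.exp (s • Abar) (ind 0 1)) : ℝ) =
        ∑' p : ℕ, (-1 : ℝ) ^ p * (N.factorial : ℝ) ^ p *
          s ^ (p * (N + 1) + N) / ((p * (N + 1) + N).factorial : ℝ) := by
  obtain ⟨h1, h2⟩ := aux_rec (N.factorial : ℝ) N
    (fun k n => inner ℝ (ind (-(k : ℝ)) (-(k : ℝ) + 1)) ((Abar ^ n) (ind 0 1)))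
    (fun k => by simpa using aux_orth k)
    (fun k n => by
      simp only [pow_succ', ContinuousLinearMap.mul_apply, hAbar, inner_sub_right,
        inner_smul_right, aux_shift A hA, aux_orth]
      push_cast
      congr 4 <;> ring)
  simp only [Int.cast_natCast] at h1 h2
  have hsum := NormedSpace.exp_series_hasSum_exp' (𝕂 := ℝ) (s • Abar)
  have h3 := (hsum.mapL (ContinuousLinearMap.apply ℝ _ (ind 0 1))).mapL
    (innerSL ℝ (ind (-(N : ℝ)) (-(N : ℝ) + 1)))
  have h4 := h3.tsum_eq
  simp only [ContinuousLinearMap.apply_apply, innerSL_apply_apply] at h4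
  rw [← h4]
  have hinj : Function.Injective (fun p : ℕ => p * (N + 1) + N) := by
    intro p q h
    exact Nat.eq_of_mul_eq_mul_right (Nat.succ_pos N) (Nat.add_right_cancel h)
  rw [← hinj.tsum_eq]
  · congr 1
    ext p
    simp only [smul_pow, ContinuousLinearMap.smul_apply, inner_smul_right, h1]
    rw [neg_pow]
    ring
  · intro n hn
    by_contra hc
    apply hn
    simp only [smul_pow, ContinuousLinearMap.smul_apply, inner_smul_right]
    rw [h2 n (fun p hp => hc ⟨p, hp.symm⟩)]
    simp

theorem aux_ml (N : ℕ) (s : ℝ) :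
    ∑' p : ℕ, (-1 : ℝ) ^ p * (N.factorial : ℝ) ^ p *
          s ^ (p * (N + 1) + N) / ((p * (N + 1) + N).factorial : ℝ) =
    s ^ N * mittagLeffler (N + 1) (N + 1) (-(N.factorial : ℝ) * s ^ (N + 1)) := by
  unfold mittagLeffler
  rw [← tsum_mul_left]
  congr 1
  ext p
  rw [← Real.Gamma_nat_eq_factorial (p * (N + 1) + N)]
  have : (((p * (N + 1) + N : ℕ) : ℝ) + 1) = ((N : ℝ) + 1) * p + (N + 1) := by push_cast; ring
  rw [this, mul_pow, neg_pow, pow_add, ← pow_mul, mul_comm p]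
  ring

/-- Let `A` be the shift operator on `L²(ℝ)`, `N ∈ ℕ`, and
`Ā z := A z − N! ⟨1_{[-N,-N+1]}, z⟩ 1_{[0,1]}`.  Then for every `s ≥ 0`,
`⟨1_{[-N,-N+1]}, exp(sĀ) 1_{[0,1]}⟩ = ∑_{p=0}^∞ (−1)^p (N!)^p s^{p(N+1)+N}/(p(N+1)+N)!`,
i.e. it equals `s^N E_{N+1,N+1}(−N! s^{N+1})`.  Consequently the optimal advertising control
for the monomial kernel `t^N` with `α = β = 1`, `a₁ = a₂ = 1` is
`û(t) = (N! (T−t)^N / 2) E_{N+1,N+1}(−N! (T−t)^{N+1})`. -/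
theorem monomial_kernel_optimal_control
    (A : Lp ℝ 2 (volume : Measure ℝ) →L[ℝ] Lp ℝ 2 (volume : Measure ℝ))
    (hA : ∀ f : Lp ℝ 2 (volume : Measure ℝ), (A f : ℝ → ℝ) =ᵐ[volume] fun x => f (x + 1))
    (N : ℕ)
    (Abar : Lp ℝ 2 (volume : Measure ℝ) →L[ℝ] Lp ℝ 2 (volume : Measure ℝ))
    (hAbar : ∀ z, Abar z = A z -
      ((N.factorial : ℝ) * (inner ℝ (ind (-(N : ℝ)) (-(N : ℝ) + 1)) z : ℝ)) • ind 0 1) :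
    (∀ s : ℝ, 0 ≤ s →
      (inner ℝ (ind (-(N : ℝ)) (-(N : ℝ) + 1))
          (NormedSpace.exp (s • Abar) (ind 0 1)) : ℝ) =
        ∑' p : ℕ, (-1 : ℝ) ^ p * (N.factorial : ℝ) ^ p *
          s ^ (p * (N + 1) + N) / ((p * (N + 1) + N).factorial : ℝ)) ∧
    (∀ s : ℝ, 0 ≤ s →
      (inner ℝ (ind (-(N : ℝ)) (-(N : ℝ) + 1))
          (NormedSpace.exp (s • Abar) (ind 0 1)) : ℝ) =
        s ^ N * mittagLeffler (N + 1) (N + 1) (-(N.factorial : ℝ) * s ^ (N + 1))) ∧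
    (∀ T : ℝ, 0 < T → ∀ t ∈ Set.Icc (0 : ℝ) T,
      ((1 : ℝ) * 1 / (2 * 1)) *
          (inner ℝ ((N.factorial : ℝ) • ind (-(N : ℝ)) (-(N : ℝ) + 1))
            (NormedSpace.exp ((T - t) • Abar) (ind 0 1)) : ℝ) =
        ((N.factorial : ℝ) * (T - t) ^ N / 2) *
          mittagLeffler (N + 1) (N + 1) (-(N.factorial : ℝ) * (T - t) ^ (N + 1))) := by
  have hm := aux_main A hA N Abar hAbar
  refine ⟨fun s _ => hm s, fun s _ => (hm s).trans (aux_ml N s), fun T _ t _ => ?_⟩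
  rw [real_inner_smul_left, hm, aux_ml]
  ring
end
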